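/- For every π ∈ W_n one has A_n(π^{−1}) = B_n(π) and B_n(π^{−1}) = A_n(π). -/

import Mathlib

open scoped Classical

noncomputable section

/-! ## The hyperoctahedral group `W_n` as signed permutations of `I_n ⊆ ℤ` -/

abbrev P := Equiv.Perm ℤ

/-- `W_n` : permutations of `I_n = {±1, …, ±n}` commuting with `i ↦ -i`,
realized as permutations of `ℤ` fixing everything outside `I_n`. -/
def Wset (n : ℕ) : Set P :=
  {π | (∀ i : ℤ, π (-i) = - π i) ∧ ∀ i : ℤ, (n : ℤ) < |i| → π i = i}

/-- the generator `t = (1, -1)` -/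
def tgen : P := Equiv.swap 1 (-1)

/-- the generator `s_i = (i, i+1)(-i, -(i+1))` -/
def sgen (i : ℕ) : P :=
  Equiv.swap (i : ℤ) ((i : ℤ) + 1) * Equiv.swap (-(i : ℤ)) (-((i : ℤ) + 1))

/-- the generating set `S_n = {t, s_1, …, s_{n-1}}` -/
def Sset (n : ℕ) : Set P := insert tgen (sgen '' Set.Icc 1 (n - 1))

/-- the length function of `W_n` with respect to `S_n` -/
def len (n : ℕ) (w : P) : ℕ :=
  sInf {k | ∃ l : List P, (∀ g ∈ l, g ∈ Sset n) ∧ l.prod = w ∧ l.length = k}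

/-- number of occurrences of `tgen` in a list -/
def tcount (l : List P) : ℕ := (l.map (fun g => if g = tgen then 1 else 0)).sum

/-- `ℓ_t(w)` : the number of occurrences of `t` in a (any) reduced expression of `w` -/
def tlen (n : ℕ) (w : P) : ℕ :=
  sInf {k | ∃ l : List P, (∀ g ∈ l, g ∈ Sset n) ∧ l.prod = w ∧
    l.length = len n w ∧ tcount l = k}

/-- the Bruhat order on `W_n` : `x ≤ y` iff some reduced expression of `y`
has a subword whose product is `x`. -/
def bruhat (n : ℕ) (x y : P) : Prop :=
  ∃ l l' : List P, (∀ g ∈ l, g ∈ Sset n) ∧ l.prod = y ∧ l.length = len n y ∧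
    List.Sublist l' l ∧ l'.prod = x

/-! ## Generalized Robinson–Schensted correspondence -/

abbrev Tab := List (List ℕ)

/-- row insertion of `x` into one row; returns the new row and the bumped entry (if any) -/
def insRow (x : ℕ) : List ℕ → List ℕ × Option ℕ
  | [] => ([x], none)
  | y :: ys =>
    if x < y then (x :: ys, some y)
    else
      let p := insRow x ys
      (y :: p.1, p.2)

/-- Schensted insertion of `x` into a tableau; returns the new tableau
and the (row, column) coordinates of the newly created box. -/
def insTab (x : ℕ) : Tab → Tab × ℕ × ℕ
  | [] => ([[x]], 0, 0)
  | row :: rest =>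
    let p := insRow x row
    match p.2 with
    | none => (p.1 :: rest, 0, row.length)
    | some b =>
      let q := insTab b rest
      (p.1 :: q.1, q.2.1 + 1, q.2.2)

/-- place the label `lbl` at the end of row `pos.1` of the recording tableau -/
def place (lbl : ℕ) (pos : ℕ × ℕ) (T : Tab) : Tab :=
  if pos.1 < T.length then T.set pos.1 ((T.getD pos.1 []) ++ [lbl]) else T ++ [[lbl]]

/-- one step of the generalized RS algorithm: insert `|π(i)|` into `A⁺` or `A⁻`
according to the sign of `π(i)`, and record `i` in the corresponding `B`-tableau. -/
def RSstep (π : P) (st : (Tab × Tab) × (Tab × Tab)) (i : ℕ) : (Tab × Tab) × (Tab × Tab) :=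
  let v := (π (i : ℤ)).natAbs
  if 0 < π (i : ℤ) then
    let p := insTab v st.1.1
    ((p.1, st.1.2), (place i p.2 st.2.1, st.2.2))
  else
    let p := insTab v st.1.2
    ((st.1.1, p.1), (st.2.1, place i p.2 st.2.2))

def RSfull (n : ℕ) (π : P) : (Tab × Tab) × (Tab × Tab) :=
  (((List.range n).map (· + 1)).foldl (RSstep π)) ((([], []), ([], [])))

/-- the insertion bitableau `A_n(π) = (A⁺, A⁻)` -/
def Atab (n : ℕ) (π : P) : Tab × Tab := (RSfull n π).1

/-- the recording bitableau `B_n(π) = (B⁺, B⁻)` -/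
def Btab (n : ℕ) (π : P) : Tab × Tab := (RSfull n π).2

/-- `T` is a standard Young tableau -/
def IsStdTab (T : Tab) : Prop :=
  (∀ row ∈ T, row ≠ [] ∧ row.Chain' (· < ·)) ∧
  T.Chain' (fun r1 r2 => r2.length ≤ r1.length) ∧
  ∀ i j : ℕ, i + 1 < T.length → j < (T.getD (i + 1) []).length →
    (T.getD i []).getD j 0 < (T.getD (i + 1) []).getD j 0

/-- `(T₁, T₂)` is an `n`-standard bitableau: both standard, entry sets disjoint
with union `{1, …, n}` -/
def IsNStdBitab (n : ℕ) (p : Tab × Tab) : Prop :=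
  IsStdTab p.1 ∧ IsStdTab p.2 ∧ (p.1.flatten ++ p.2.flatten).Perm (List.range' 1 n)

/-- the shape of a bitableau -/
def shape2 (p : Tab × Tab) : List ℕ × List ℕ := (p.1.map List.length, p.2.map List.length)

/-! ## Knuth relations -/

/-- `t_i = (i, -i)` -/
def ttgen (i : ℕ) : P := Equiv.swap (i : ℤ) (-(i : ℤ))

/-- `S'_n = S_n ∪ {t_1, …, t_n}` -/
def Sprime (n : ℕ) : Set P := Sset n ∪ (ttgen '' Set.Icc 1 n)

/-- the extended left descent set `L'(w)` -/
def Ldesc (n : ℕ) (w : P) : Set P := {u ∈ Sprime n | len n (u * w) < len n w}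

/-- the elementary relation `x —s→ y` -/
def knuthStep (n : ℕ) (x y : P) : Prop :=
  ∃ i ∈ Set.Icc 1 (n - 1), y = sgen i * x ∧ len n x < len n y ∧
    ¬ (Ldesc n x ⊆ Ldesc n y)

/-- the relation `x ↔_L y` -/
def knuthRel (n : ℕ) : P → P → Prop :=
  Relation.ReflTransGen (fun a b => knuthStep n a b ∨ knuthStep n b a)

/-! ## Parabolic subgroups, coset representatives and the decomposition -/

/-- the parabolic subgroup `𝔖_n = ⟨s_1, …, s_{n-1}⟩` -/
def SymN (n : ℕ) : Subgroup P := Subgroup.closure (sgen '' Set.Icc 1 (n - 1))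

/-- the parabolic subgroup `𝔖_{l, n-l} = ⟨{s_1, …, s_{n-1}} \ {s_l}⟩` -/
def SymLR (n l : ℕ) : Subgroup P :=
  Subgroup.closure (sgen '' {i | 1 ≤ i ∧ i ≤ n - 1 ∧ i ≠ l})

/-- `Y_{l, n-l}` : minimal length representatives of left cosets of `𝔖_{l,n-l}` in `𝔖_n` -/
def Yset (n l : ℕ) : Set P :=
  {w | w ∈ SymN n ∧ ∀ u ∈ SymLR n l, len n w ≤ len n (w * u)}

/-- `X_n` : minimal length representatives of the left cosets `w 𝔖_n` in `W_n` -/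
def Xset (n : ℕ) : Set P :=
  {w | w ∈ Wset n ∧ ∀ u ∈ SymN n, len n w ≤ len n (w * u)}

/-- `X_n^{(l)}` -/
def Xl (n l : ℕ) : Set P := {w ∈ Xset n | tlen n w = l}

/-- `r_1 = t`, `r_{i+1} = s_i r_i` -/
def rgen : ℕ → P
  | 0 => 1
  | 1 => tgen
  | (i + 2) => sgen (i + 1) * rgen (i + 1)

/-- `a_l = r_1 r_2 ⋯ r_l` -/
def al (l : ℕ) : P := ((List.range l).map (fun k => rgen (k + 1))).prod

/-- the set `X_n^{(l)} ⬝ 𝔖_{l, n-l}` -/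
def XSset (n l : ℕ) : Set P := Set.image2 (· * ·) (Xl n l) (SymLR n l : Set P)

/-- `w = a ⬝ a_l ⬝ σ ⬝ b⁻¹` is the canonical decomposition of `w`
(with `a, b ∈ Y_{l,n-l}`, `σ ∈ 𝔖_{l,n-l}` and additivity of lengths) -/
def IsDecomp (n l : ℕ) (w a σ b : P) : Prop :=
  a ∈ Yset n l ∧ b ∈ Yset n l ∧ σ ∈ SymLR n l ∧ w = a * al l * σ * b⁻¹ ∧
    len n w = len n a + len n (al l) + len n σ + len n b

/-- the relation `w ⇝_L w'` -/
def squig (n : ℕ) (w w' : P) : Prop :=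
  ∃ l a σ b a' σ', tlen n w = l ∧ tlen n w' = l ∧
    IsDecomp n l w a σ b ∧ IsDecomp n l w' a' σ' b ∧ knuthRel n σ σ'

/-! ## The two-parameter Iwahori–Hecke algebra and Kazhdan–Lusztig data -/

/-- the ring `A = ℤ[V^{±1}, v^{±1}]`, as the group algebra of `Γ = ℤ × ℤ`
(a monomial `V^i v^j` corresponds to `(i,j) ∈ ℤ × ℤ`). -/
abbrev RR := AddMonoidAlgebra ℤ (ℤ × ℤ)

/-- the monomial with exponent `g` -/
def mono (g : ℤ × ℤ) : RR := AddMonoidAlgebra.single g 1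

/-- `Γ₋` for the lexicographic order with `V ≫ v`: `V^i v^j < 1` -/
def Gneg (g : ℤ × ℤ) : Prop := g.1 < 0 ∨ (g.1 = 0 ∧ g.2 < 0)

/-- an element of `ℤ[Γ₋]` : all monomials lie in `Γ₋` -/
def inNeg (f : RR) : Prop := ∀ g ∈ f.coeff.support, Gneg g

/-- the bar involution of `A`, `V ↦ V⁻¹`, `v ↦ v⁻¹` -/
def barR : RR → RR := fun f => .ofCoeff (Finsupp.equivMapDomain (Equiv.neg (ℤ × ℤ)) f.coeff)

/-- the parameter `v_s` of a generator (`v_t = V`, `v_{s_i} = v`) -/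
def vgen (g : P) : RR := if g = tgen then mono (1, 0) else mono (0, 1)

/-- the inverse `v_s⁻¹` of the parameter of a generator -/
def vgenInv (g : P) : RR := if g = tgen then mono (-1, 0) else mono (0, -1)

/-- the free `A`-module with basis indexed by permutations; the Hecke algebra
`H_n` is carried by the elements supported on `W_n`. -/
abbrev HH := P →₀ RR

/-- the standard basis element `T_w` -/
def TT (w : P) : HH := Finsupp.single w 1

/-- All the data attached to the Iwahori–Hecke algebra `H_n` of `W_n` over
`A = ℤ[V^{±1}, v^{±1}]`: the multiplication, the bar involution, the
Kazhdan–Lusztig basis `C_w = Σ_y P*_{y,w} T_y` (for the order on `Γ` given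
by `Γ₊ = {V^i v^j : i > 0} ∪ {v^j : j > 0}`), and Lusztig's `M`-polynomials,
together with their defining properties. -/
structure KLData (n : ℕ) where
  mul : HH → HH → HH
  mul_add_left : ∀ a b c, mul (a + b) c = mul a c + mul b c
  mul_add_right : ∀ a b c, mul a (b + c) = mul a b + mul a c
  mul_smul_left : ∀ (r : RR) a b, mul (r • a) b = r • mul a b
  mul_smul_right : ∀ (r : RR) a b, mul a (r • b) = r • mul a b
  mul_assoc : ∀ a b c, mul (mul a b) c = mul a (mul b c)
  one_mul : ∀ a, mul (TT 1) a = a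
  mul_one : ∀ a, mul a (TT 1) = a
  /-- `T_w T_{w'} = T_{w w'}` when lengths add -/
  T_mul : ∀ w w', w ∈ Wset n → w' ∈ Wset n →
    len n (w * w') = len n w + len n w' → mul (TT w) (TT w') = TT (w * w')
  /-- the quadratic relations `T_s² = T_1 + (v_s - v_s⁻¹) T_s` -/
  T_sq : ∀ g ∈ Sset n, mul (TT g) (TT g) = TT 1 + (vgen g - vgenInv g) • TT g
  bar : HH → HH
  bar_add : ∀ a b, bar (a + b) = bar a + bar b
  bar_smul : ∀ (r : RR) a, bar (r • a) = barR r • bar a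
  bar_mul : ∀ a b, bar (mul a b) = mul (bar a) (bar b)
  /-- `bar T_s = T_s⁻¹ = T_s + (v_s⁻¹ - v_s) T_1` -/
  bar_gen : ∀ g ∈ Sset n, bar (TT g) = TT g + (vgenInv g - vgen g) • TT 1
  /-- the Kazhdan–Lusztig basis element `C_w`, whose coordinate at `T_y` is
  the polynomial `P*_{y,w}` -/
  C : P → HH
  /-- `P*_{w,w} = 1` -/
  C_self : ∀ w, C w w = 1
  /-- `P*_{y,w} = 0` unless `y ≤ w` -/
  C_supp : ∀ w y, C w y ≠ 0 → bruhat n y w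
  /-- `P*_{y,w} ∈ ℤ[Γ₋]` for `y < w` -/
  C_neg : ∀ w y, y ≠ w → inNeg (C w y)
  /-- `C_w` is bar-invariant -/
  C_bar : ∀ w, w ∈ Wset n → bar (C w) = C w
  /-- `M s w` is the finitely supported family `z ↦ M^s_{z,w}` -/
  M : P → P → (P →₀ RR)
  M_supp : ∀ s w z, (M s w) z ≠ 0 → bruhat n z w ∧ z ≠ w ∧ len n (s * z) < len n z
  /-- the symmetry condition `bar M^s_{y,w} = M^s_{y,w}` -/
  M_bar : ∀ s w z, barR ((M s w) z) = (M s w) z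
  /-- the condition `M^s_{y,w} + Σ_{y<z<w, sz<z} P*_{y,z} M^s_{z,w} - v_s P*_{y,w} ∈ ℤ[Γ₋]` -/
  M_cond : ∀ s ∈ Sset n, ∀ y w, len n (s * y) < len n y → len n w < len n (s * w) →
    bruhat n y w → y ≠ w →
    inNeg ((M s w) y + (M s w).sum (fun z m => if z = y then 0 else C z y * m)
      - vgen s * C w y)
  /-- `C_s C_w = C_{sw} + Σ_{z<w, sz<z} M^s_{z,w} C_z` when `sw > w` -/
  mulC_up : ∀ s ∈ Sset n, ∀ w ∈ Wset n, len n w < len n (s * w) →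
    mul (C s) (C w) = C (s * w) + (M s w).sum (fun z m => m • C z)
  /-- `C_s C_w = (v_s + v_s⁻¹) C_w` when `sw < w` -/
  mulC_down : ∀ s ∈ Sset n, ∀ w ∈ Wset n, len n (s * w) < len n w →
    mul (C s) (C w) = (vgen s + vgenInv s) • C w

/-- `P_{y,w} = v_y⁻¹ v_w P*_{y,w}` -/
def Ppoly (n : ℕ) (D : KLData n) (y w : P) : RR :=
  mono ((tlen n w : ℤ) - (tlen n y : ℤ),
        ((len n w : ℤ) - (tlen n w : ℤ)) - ((len n y : ℤ) - (tlen n y : ℤ))) * D.C w y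

/-- the `R`-polynomials : `bar T_w = Σ_y R_{y,w} T_y` -/
def Rpoly {n : ℕ} (D : KLData n) (y w : P) : RR := (D.bar (TT w)) y

/-- `y ≤_{L,s} w` : `C_y` occurs with non-zero coefficient in `C_s C_w`
(expressed in the `C`-basis), for some `s ∈ S_n`, `y ≠ w` -/
def leLelem {n : ℕ} (D : KLData n) (y w : P) : Prop :=
  ∃ s ∈ Sset n, len n w < len n (s * w) ∧ (y = s * w ∨ (D.M s w) y ≠ 0)

/-- the preorder `≤_L` -/
def leL {n : ℕ} (D : KLData n) : P → P → Prop := Relation.ReflTransGen (leLelem D)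

/-- the equivalence `∼_L`; its classes are the left cells -/
def simL {n : ℕ} (D : KLData n) (y w : P) : Prop := leL D y w ∧ leL D w y

/-- `f` is a polynomial in `q = v²` -/
def isPolyInQ (f : RR) : Prop := ∀ g ∈ f.coeff.support, g.1 = 0 ∧ 0 ≤ g.2 ∧ 2 ∣ g.2

end

/-!
The argument is Fomin's growth diagram, for a partial injection `f` of `ℕ`. Let `P(i, j)` be the
tableau obtained by inserting those values `f 0, …, f (i - 1)` that are defined and less than `j`.
Inserting an entry commutes with adjoining a strictly larger one, up to a local rule that moves a
box one row down when the two new boxes collide. Hence passing from `P(i, j)` to `P(i, j + 1)`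
adjoins the label `j` in some row, and since the local rule is symmetric, that row is the one where
the insertion process of `f⁻¹` creates its box at step `j`. So `P(i, j)` is also the recording
tableau of `f⁻¹`. A signed permutation is a pair of partial injections, given by its positive and
its negative values, and inverting it inverts both.
-/

section RowInsertion

variable {x b : ℕ} {row l r : List ℕ}

theorem insRow_of_forall_le (h : ∀ y ∈ row, y ≤ x) : insRow x row = (row ++ [x], none) := by
  induction row with
  | nil => rfl
  | cons y ys ih =>
    obtain ⟨hy, hys⟩ := List.forall_mem_cons.1 h
    simp [insRow, hy.not_gt, ih hys]

theorem insRow_append_cons (hl : ∀ y ∈ l, y ≤ x) (hb : x < b) :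
    insRow x (l ++ b :: r) = (l ++ x :: r, some b) := by
  induction l with
  | nil => simp [insRow, hb]
  | cons y ys ih =>
    obtain ⟨hy, hys⟩ := List.forall_mem_cons.1 hl
    simp [insRow, hy.not_gt, ih hys]

theorem forall_le_or_exists_eq_append_cons (x : ℕ) (row : List ℕ) :
    (∀ y ∈ row, y ≤ x) ∨ ∃ l b r, row = l ++ b :: r ∧ (∀ y ∈ l, y ≤ x) ∧ x < b := by
  induction row with
  | nil => simp
  | cons y ys ih =>
    rcases lt_or_ge x y with hy | hy
    · exact .inr ⟨[], y, ys, rfl, by simp, hy⟩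
    · rcases ih with hys | ⟨l, b, r, rfl, hl, hb⟩
      · exact .inl (List.forall_mem_cons.2 ⟨hy, hys⟩)
      · exact .inr ⟨y :: l, b, r, rfl, List.forall_mem_cons.2 ⟨hy, hl⟩, hb⟩

end RowInsertion

section TableauInsertion

variable {x b m : ℕ} {row l r : List ℕ} {T : Tab}

theorem insTab_cons_of_forall_le (h : ∀ y ∈ row, y ≤ x) :
    insTab x (row :: T) = ((row ++ [x]) :: T, 0, row.length) := by
  simp [insTab, insRow_of_forall_le h]

theorem insTab_append_cons_cons (hl : ∀ y ∈ l, y ≤ x) (hb : x < b) :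
    insTab x ((l ++ b :: r) :: T) =
      ((l ++ x :: r) :: (insTab b T).1, (insTab b T).2.1 + 1, (insTab b T).2.2) := by
  simp [insTab, insRow_append_cons hl hb]

theorem length_le_length_insTab (x : ℕ) (T : Tab) : T.length ≤ (insTab x T).1.length := by
  induction T generalizing x with
  | nil => simp
  | cons row T ih =>
    obtain h | ⟨l, b, r, rfl, hl, hb⟩ := forall_le_or_exists_eq_append_cons x row
    · simp [insTab_cons_of_forall_le h]
    · simpa [insTab_append_cons_cons hl hb] using ih b

theorem row_lt_length_insTab (x : ℕ) (T : Tab) : (insTab x T).2.1 < (insTab x T).1.length := by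
  induction T generalizing x with
  | nil => simp [insTab]
  | cons row T ih =>
    obtain h | ⟨l, b, r, rfl, hl, hb⟩ := forall_le_or_exists_eq_append_cons x row
    · simp [insTab_cons_of_forall_le h]
    · simpa [insTab_append_cons_cons hl hb] using ih b

/-- All entries of the tableau `T` are less than `m`. -/
def EntriesLt (m : ℕ) (T : Tab) : Prop := ∀ row ∈ T, ∀ y ∈ row, y < m

theorem entriesLt_nil (m : ℕ) : EntriesLt m [] := by simp [EntriesLt]

theorem entriesLt_cons : EntriesLt m (row :: T) ↔ (∀ y ∈ row, y < m) ∧ EntriesLt m T :=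
  List.forall_mem_cons

theorem entriesLt_insTab (hx : x < m) (hT : EntriesLt m T) : EntriesLt m (insTab x T).1 := by
  induction T generalizing x with
  | nil => simpa [insTab, EntriesLt] using hx
  | cons row T ih =>
    obtain ⟨hrow, hrest⟩ := entriesLt_cons.1 hT
    obtain h | ⟨l, b, r, rfl, hl, hb⟩ := forall_le_or_exists_eq_append_cons x row
    · rw [insTab_cons_of_forall_le h, entriesLt_cons, List.forall_mem_append]
      exact ⟨⟨hrow, by simpa using hx⟩, hrest⟩
    · rw [insTab_append_cons_cons hl hb, entriesLt_cons]
      rw [List.forall_mem_append, List.forall_mem_cons] at hrow ⊢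
      exact ⟨⟨hrow.1, hx, hrow.2.2⟩, ih hrow.2.1 hrest⟩

end TableauInsertion

theorem place_zero_cons (m c : ℕ) (row : List ℕ) (T : Tab) :
    place m (0, c) (row :: T) = (row ++ [m]) :: T := by
  simp [place]

theorem place_succ_cons (m r c : ℕ) (row : List ℕ) (T : Tab) :
    place m (r + 1, c) (row :: T) = row :: place m (r, c) T := by
  by_cases h : r < T.length <;> simp [place, h]

/-- Adjoin the label `m` at the end of the given row of `T`, or leave `T` alone if no row is given.
The column passed to `place` is irrelevant, as `place` only looks at the row. -/
def addLabel (m : ℕ) (a : Option ℕ) (T : Tab) : Tab := a.elim T fun r => place m (r, 0) T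

/-- Insert `x`, if present, into `T`. Returns the new tableau and the row of the new box, if any. -/
def insOption (x : Option ℕ) (T : Tab) : Tab × Option ℕ :=
  x.elim (T, none) fun v => ((insTab v T).1, some (insTab v T).2.1)

/-- Row `a` is an existing row of `T` or the first one below `T`; no condition if `a = none`. -/
def RowAddable (a : Option ℕ) (T : Tab) : Prop := ∀ r ∈ a, r ≤ T.length

/-- Fomin's local rule for rows of new boxes: if the boxes in rows `a` and `b` collide, then `a`
moves one row down, and otherwise `a` stays. -/
def localRule (a b : Option ℕ) : Option ℕ := if a = b then a.map (· + 1) else a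

section Commutation

variable {x b m : ℕ} {row l r : List ℕ} {T : Tab} {a : Option ℕ}

theorem localRule_self (a : Option ℕ) : localRule a a = a.map (· + 1) := if_pos rfl

theorem localRule_of_ne {a b : Option ℕ} (h : a ≠ b) : localRule a b = a := if_neg h

theorem localRule_none_left (b : Option ℕ) : localRule none b = none := by simp [localRule]

theorem localRule_none_right (a : Option ℕ) : localRule a none = a := by
  cases a <;> simp [localRule]

theorem localRule_map_succ (a b : Option ℕ) :
    localRule (a.map (· + 1)) (b.map (· + 1)) = (localRule a b).map (· + 1) := by
  have hinj : a.map (· + 1) = b.map (· + 1) ↔ a = b :=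
    (Option.map_injective (add_left_injective 1)).eq_iff
  simp only [localRule, hinj, apply_ite (Option.map (· + 1))]

theorem addLabel_zero_cons (m : ℕ) (row : List ℕ) (T : Tab) :
    addLabel m (some 0) (row :: T) = (row ++ [m]) :: T :=
  place_zero_cons m 0 row T

theorem addLabel_map_succ_cons (m : ℕ) (a : Option ℕ) (row : List ℕ) (T : Tab) :
    addLabel m (a.map (· + 1)) (row :: T) = row :: addLabel m a T := by
  cases a with
  | none => rfl
  | some r => exact place_succ_cons m r 0 row T

theorem insOption_cons_of_forall_le (h : ∀ y ∈ row, y ≤ x) :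
    insOption (some x) (row :: T) = ((row ++ [x]) :: T, some 0) := by
  simp [insOption, insTab_cons_of_forall_le h]

theorem insOption_append_cons_cons (hl : ∀ y ∈ l, y ≤ x) (hb : x < b) :
    insOption (some x) ((l ++ b :: r) :: T) =
      ((l ++ x :: r) :: (insOption (some b) T).1, (insOption (some b) T).2.map (· + 1)) := by
  simp [insOption, insTab_append_cons_cons hl hb]

theorem insOption_eq_addLabel_of_entriesLt (hT : EntriesLt m T) :
    insOption (some m) T = (addLabel m (some 0) T, some 0) := by
  cases T with
  | nil => rfl
  | cons row T =>
    rw [insOption_cons_of_forall_le fun y hy => (hT row (by simp) y hy).le, addLabel_zero_cons]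

theorem RowAddable.localRule_insOption (ha : RowAddable a T) (x : Option ℕ) :
    RowAddable (localRule a (insOption x T).2) (insOption x T).1 := by
  cases x with
  | none => simpa [insOption, localRule_none_right] using ha
  | some v =>
    change RowAddable (localRule a (some (insTab v T).2.1)) (insTab v T).1
    by_cases hcol : a = some (insTab v T).2.1
    · rw [hcol, localRule_self]
      rintro _ ⟨⟩
      exact row_lt_length_insTab v T
    · rw [localRule_of_ne hcol]
      exact fun r hr => (ha r hr).trans (length_le_length_insTab v T)

/-- The heart of the argument: inserting `x` commutes with adjoining an entry `m` larger than `x`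
and than all entries of `T`, except that a collision pushes one of the two new boxes down. -/
theorem insOption_some_addLabel (hx : x < m) (hT : EntriesLt m T) (ha : RowAddable a T) :
    insOption (some x) (addLabel m a T) =
      (addLabel m (localRule a (insOption (some x) T).2) (insOption (some x) T).1,
        localRule (insOption (some x) T).2 a) := by
  induction T generalizing x a with
  | nil =>
    rcases a with _ | r
    · rfl
    · obtain rfl : r = 0 := by simpa [RowAddable] using ha
      simp [insOption, addLabel, place, insTab, insRow, hx, localRule]
  | cons row T ih =>
    obtain ⟨hrow, hrest⟩ := entriesLt_cons.1 hT
    rcases a with _ | _ | r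
    · simp [addLabel, localRule_none_left, localRule_none_right]
    · rw [addLabel_zero_cons]
      obtain h | ⟨l, b, r, rfl, hl, hb⟩ := forall_le_or_exists_eq_append_cons x row
      · rw [insOption_append_cons_cons h hx, insOption_eq_addLabel_of_entriesLt hrest,
          insOption_cons_of_forall_le h]
        exact congrArg (·, some 1) (addLabel_map_succ_cons m (some 0) (row ++ [x]) T).symm
      · rw [List.append_assoc, List.cons_append, insOption_append_cons_cons hl hb,
          insOption_append_cons_cons hl hb]
        simp [insOption, localRule, addLabel_zero_cons]
    · have ha' : RowAddable (some r) T := by simpa [RowAddable] using ha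
      rw [show some (r + 1) = (some r).map (· + 1) from rfl, addLabel_map_succ_cons]
      obtain h | ⟨l, b, s, rfl, hl, hb⟩ := forall_le_or_exists_eq_append_cons x row
      · simp [insOption_cons_of_forall_le h, localRule, addLabel, place_succ_cons]
      · have hbm : b < m := hrow b (by simp)
        simp only [insOption_append_cons_cons hl hb, ih hbm hrest ha', localRule_map_succ,
          addLabel_map_succ_cons]

theorem insOption_addLabel {x : Option ℕ} (hx : ∀ v ∈ x, v < m) (hT : EntriesLt m T)
    (ha : RowAddable a T) :
    insOption x (addLabel m a T) =
      (addLabel m (localRule a (insOption x T).2) (insOption x T).1,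
        localRule (insOption x T).2 a) := by
  cases x with
  | none => simp [insOption, localRule_none_left, localRule_none_right]
  | some v => exact insOption_some_addLabel (hx v rfl) hT ha

end Commutation

/-- The value of the partial injection `f` at position `i`, if it is defined and less than `j`. -/
def entryBelow (f : ℕ ≃. ℕ) (i j : ℕ) : Option ℕ := (f i).filter (· < j)

/-- The insertion tableau `P(i, j)` of `f`, restricted to positions less than `i` and values less
than `j`. -/
def insertionTab (f : ℕ ≃. ℕ) : ℕ → ℕ → Tab
  | 0, _ => []
  | i + 1, j => (insOption (entryBelow f i j) (insertionTab f i j)).1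

/-- The row of the box created when position `i` of `f`, restricted to values less than `j`, is
inserted. -/
def newRow (f : ℕ ≃. ℕ) (i j : ℕ) : Option ℕ :=
  (insOption (entryBelow f i j) (insertionTab f i j)).2

/-- The recording tableau of `f`, restricted to positions less than `i` and values less than `j`. -/
def recordingTab (f : ℕ ≃. ℕ) : ℕ → ℕ → Tab
  | 0, _ => []
  | i + 1, j => addLabel i (newRow f i j) (recordingTab f i j)

/-- Admitting the value `j` into the insertion tableau `P(i, j)` of `f` adjoins it as a label, in
the row where the insertion process of `f⁻¹` creates its box at step `j`. -/
structure GrowsAt (f : ℕ ≃. ℕ) (i j : ℕ) : Prop where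
  insertionTab_succ :
    insertionTab f i (j + 1) = addLabel j (newRow f.symm j i) (insertionTab f i j)
  rowAddable : RowAddable (newRow f.symm j i) (insertionTab f i j)

section GrowthDiagram

variable {f : ℕ ≃. ℕ} {i j : ℕ}

theorem mem_entryBelow {v : ℕ} : v ∈ entryBelow f i j ↔ v ∈ f i ∧ v < j := by
  simp [entryBelow]

theorem entryBelow_zero_right (f : ℕ ≃. ℕ) (i : ℕ) : entryBelow f i 0 = none := by
  simp [entryBelow]

theorem entryBelow_eq_none_of_eq (h : f i = some j) : entryBelow f i j = none := by
  simp [entryBelow, h, Option.filter]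

theorem entryBelow_succ_of_eq (h : f i = some j) : entryBelow f i (j + 1) = some j := by
  simp [entryBelow, h]

theorem entryBelow_succ_of_ne (h : f i ≠ some j) : entryBelow f i (j + 1) = entryBelow f i j := by
  refine Option.ext_iff.2 fun v => ?_
  have hvj : v ∈ f i → v ≠ j := fun hv e => h (e ▸ hv)
  have hlt : v ∈ f i ∧ v < j + 1 ↔ v ∈ f i ∧ v < j := by grind
  exact mem_entryBelow.trans (hlt.trans mem_entryBelow.symm)

theorem entriesLt_insertionTab (f : ℕ ≃. ℕ) (i j : ℕ) : EntriesLt j (insertionTab f i j) := by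
  induction i with
  | zero => exact entriesLt_nil j
  | succ i ih =>
    rw [insertionTab]
    rcases h : entryBelow f i j with _ | v
    · exact ih
    · exact entriesLt_insTab (mem_entryBelow.1 h).2 ih

theorem growsAt_zero (f : ℕ ≃. ℕ) (j : ℕ) : GrowsAt f 0 j := by
  have hrow : newRow f.symm j 0 = none := by
    rw [newRow, entryBelow_zero_right]
    rfl
  constructor <;> simp [hrow, insertionTab, addLabel, RowAddable]

namespace GrowsAt

theorem insOption_of_ne (H : GrowsAt f i j) (h : f i ≠ some j) :
    insOption (entryBelow f i (j + 1)) (insertionTab f i (j + 1)) =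
      (addLabel j (localRule (newRow f.symm j i) (newRow f i j)) (insertionTab f (i + 1) j),
        localRule (newRow f i j) (newRow f.symm j i)) := by
  rw [entryBelow_succ_of_ne h, H.insertionTab_succ,
    insOption_addLabel (fun _ hv => (mem_entryBelow.1 hv).2) (entriesLt_insertionTab f i j)
      H.rowAddable]
  rfl

theorem insOption_of_eq (H : GrowsAt f i j) (h : f i = some j) :
    insOption (entryBelow f i (j + 1)) (insertionTab f i (j + 1)) =
      (addLabel j (some 0) (insertionTab f (i + 1) j), some 0) := by
  have hvalue : insertionTab f i (j + 1) = insertionTab f i j := by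
    rw [H.insertionTab_succ, newRow, entryBelow_eq_none_of_eq (f.eq_some_iff.2 h)]
    rfl
  have hposition : insertionTab f (i + 1) j = insertionTab f i j := by
    rw [insertionTab, entryBelow_eq_none_of_eq h]
    rfl
  rw [entryBelow_succ_of_eq h, hvalue, hposition,
    insOption_eq_addLabel_of_entriesLt (entriesLt_insertionTab f i j)]

theorem succ (H : GrowsAt f i j) (H' : GrowsAt f.symm j i) : GrowsAt f (i + 1) j := by
  by_cases h : f i = some j
  · have hrow : newRow f.symm j (i + 1) = some 0 :=
      congrArg Prod.snd (H'.insOption_of_eq (f.eq_some_iff.2 h))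
    refine ⟨?_, by simp [hrow, RowAddable]⟩
    rw [hrow, insertionTab, H.insOption_of_eq h]
  · have hrow : newRow f.symm j (i + 1) = localRule (newRow f.symm j i) (newRow f i j) :=
      congrArg Prod.snd (H'.insOption_of_ne fun h' => h (f.eq_some_iff.1 h'))
    constructor
    · rw [hrow, insertionTab, H.insOption_of_ne h]
    · rw [hrow]
      exact H.rowAddable.localRule_insOption (entryBelow f i j)

end GrowsAt

theorem growsAt (f : ℕ ≃. ℕ) : ∀ i j, GrowsAt f i j
  | 0, j => growsAt_zero f j
  | i + 1, j => (growsAt f i j).succ (growsAt f.symm j i)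
termination_by i j => i + j

theorem insertionTab_zero_right (f : ℕ ≃. ℕ) (i : ℕ) : insertionTab f i 0 = [] := by
  induction i with
  | zero => rfl
  | succ i ih => simp [insertionTab, ih, entryBelow_zero_right, insOption]

theorem insertionTab_eq_recordingTab_symm (f : ℕ ≃. ℕ) (i j : ℕ) :
    insertionTab f i j = recordingTab f.symm j i := by
  induction j with
  | zero => exact insertionTab_zero_right f i
  | succ j ih => rw [(growsAt f i j).insertionTab_succ, recordingTab, ih]

end GrowthDiagram

/-- The restriction of a permutation of `ℤ` to the positive integers that have a positive image. -/
def positivePart (σ : P) : ℕ ≃. ℕ where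
  toFun i := if 0 < i ∧ 0 < σ i then some (σ i).natAbs else none
  invFun v := if 0 < v ∧ 0 < σ⁻¹ v then some (σ⁻¹ v).natAbs else none
  inv i v := by
    have hinv : σ⁻¹ v = i ↔ (v : ℤ) = σ i := Equiv.Perm.inv_eq_iff_eq
    simp only [Option.ite_none_right_eq_some, Option.some.injEq]
    omega

/-- The permutation `i ↦ -π i`, whose positive part collects the negative values of `π`. -/
def negated (π : P) : P := Equiv.neg ℤ * π

section SignedPermutations

variable {n : ℕ} {π : P}

theorem positivePart_apply_of_pos {σ : P} {i : ℕ} (hi : 0 < i) (h : 0 < σ i) :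
    positivePart σ i = some (σ i).natAbs :=
  if_pos ⟨hi, h⟩

theorem positivePart_apply_of_nonpos {σ : P} {i : ℕ} (h : σ i ≤ 0) : positivePart σ i = none :=
  if_neg fun h' => h'.2.not_ge h

theorem negated_inv (hodd : ∀ i, π (-i) = -π i) : (negated π)⁻¹ = negated π⁻¹ := by
  refine inv_eq_of_mul_eq_one_right (Equiv.ext fun i => ?_)
  simp [negated, hodd]

theorem inv_mem_Wset (hπ : π ∈ Wset n) : π⁻¹ ∈ Wset n := by
  constructor
  · intro i
    rw [Equiv.Perm.inv_eq_iff_eq, hπ.1, Equiv.Perm.inv_def, Equiv.apply_symm_apply]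
  · intro i hi
    rw [Equiv.Perm.inv_eq_iff_eq, hπ.2 i hi]

theorem natAbs_apply_le_of_mem_Wset (hπ : π ∈ Wset n) {i : ℕ} (hi : i ≤ n) :
    (π i).natAbs ≤ n := by
  by_contra! hlt
  have hfixed : π (π i) = π i := hπ.2 _ (by rw [Int.abs_eq_natAbs]; omega)
  rw [π.injective hfixed] at hlt
  omega

theorem apply_ne_zero_of_odd (hodd : ∀ i, π (-i) = -π i) {i : ℤ} (hi : i ≠ 0) : π i ≠ 0 := by
  have hzero : π 0 = 0 := by simpa [self_eq_neg] using hodd 0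
  exact fun h => hi (π.injective (h.trans hzero.symm))

theorem RSstep_eq_insOption {i : ℕ} (hi : 0 < i) (h : π i ≠ 0) (A B : Tab × Tab) :
    RSstep π (A, B) i =
      (((insOption (positivePart π i) A.1).1, (insOption (positivePart (negated π) i) A.2).1),
        (addLabel i (insOption (positivePart π i) A.1).2 B.1,
          addLabel i (insOption (positivePart (negated π) i) A.2).2 B.2)) := by
  rcases h.lt_or_gt with hneg | hpos
  · have hpos' : 0 < negated π i := by simpa [negated] using hneg
    have habs : (negated π i).natAbs = (π i).natAbs := Int.natAbs_neg _
    rw [positivePart_apply_of_nonpos hneg.le, positivePart_apply_of_pos hi hpos', habs]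
    simp only [RSstep, if_neg hneg.not_gt]
    rfl
  · have hneg' : negated π i ≤ 0 := by simpa [negated] using hpos.le
    rw [positivePart_apply_of_pos hi hpos, positivePart_apply_of_nonpos hneg']
    simp only [RSstep, if_pos hpos]
    rfl

theorem RSfull_succ (m : ℕ) (π : P) : RSfull (m + 1) π = RSstep π (RSfull m π) (m + 1) := by
  simp [RSfull, List.range_succ]

theorem entryBelow_positivePart {σ : P} {i : ℕ} (h : (σ i).natAbs ≤ n) :
    entryBelow (positivePart σ) i (n + 1) = positivePart σ i := by
  refine Option.ext_iff.2 fun v => mem_entryBelow.trans (and_iff_left_of_imp fun hv => ?_)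
  obtain ⟨-, ⟨⟩⟩ := Option.ite_none_right_eq_some.1 hv
  exact Nat.lt_succ_of_le h

theorem entryBelow_positivePart_zero (σ : P) (j : ℕ) : entryBelow (positivePart σ) 0 j = none := by
  simp [entryBelow, positivePart]

/-- In `insertionTab` positions and values start at `0`, where `positivePart` is undefined; hence
the bounds `m + 1` and `n + 1`. -/
theorem RSfull_eq_of_mem_Wset (hπ : π ∈ Wset n) {m : ℕ} (hm : m ≤ n) :
    RSfull m π =
      ((insertionTab (positivePart π) (m + 1) (n + 1),
          insertionTab (positivePart (negated π)) (m + 1) (n + 1)),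
        (recordingTab (positivePart π) (m + 1) (n + 1),
          recordingTab (positivePart (negated π)) (m + 1) (n + 1))) := by
  induction m with
  | zero =>
    simp [RSfull, insertionTab, recordingTab, newRow, entryBelow_positivePart_zero, insOption,
      addLabel]
  | succ m ih =>
    have hle : (π ↑(m + 1)).natAbs ≤ n := natAbs_apply_le_of_mem_Wset hπ hm
    have hle' : (negated π ↑(m + 1)).natAbs ≤ n := (Int.natAbs_neg _).trans_le hle
    have hne : π ↑(m + 1) ≠ 0 := apply_ne_zero_of_odd hπ.1 (by omega)
    rw [RSfull_succ, ih (by omega), RSstep_eq_insOption m.succ_pos hne,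
      ← entryBelow_positivePart hle, ← entryBelow_positivePart hle']
    rfl

theorem Atab_inv_eq_Btab (hπ : π ∈ Wset n) : Atab n π⁻¹ = Btab n π := by
  have hsymm : ∀ σ : P, (positivePart σ⁻¹).symm = positivePart σ := fun _ => rfl
  rw [Atab, Btab, RSfull_eq_of_mem_Wset (inv_mem_Wset hπ) le_rfl, RSfull_eq_of_mem_Wset hπ le_rfl]
  simp only [insertionTab_eq_recordingTab_symm, ← negated_inv hπ.1, hsymm]

end SignedPermutations

/-- For every `π ∈ W_n`, `A_n(π⁻¹) = B_n(π)` and `B_n(π⁻¹) = A_n(π)`. -/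
theorem RS_of_inverse (n : ℕ) (hn : 1 ≤ n) (π : P) (hπ : π ∈ Wset n) :
    Atab n π⁻¹ = Btab n π ∧ Btab n π⁻¹ = Atab n π := by
  refine ⟨Atab_inv_eq_Btab hπ, ?_⟩
  rw [← Atab_inv_eq_Btab (inv_mem_Wset hπ), inv_inv]
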